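/- arXiv:1502.03967 — 2 statements merged into one kernel-verified Lean document; each statement's English description precedes it below -/
import Mathlib

section
/- Let > be a semigroup order on the monomials of A = K[x₁,…,xₙ] whose local variables are exactly x_{j₁},…,x_{j_k}, and let S := {1+g : g ∈ A, g = 0 or lt(g) < 1}. Then > is a control order if and only if for every proper ideal I ⊆ A and every minimal primary decomposition I = Q₁ ∩ … ∩ Q_r, numbered so that Q_i + ⟨x_{j₁},…,x_{j_k}⟩ ≠ A exactly for i = 1,…,m, one has that S⁻¹I = S⁻¹Q₁ ∩ … ∩ S⁻¹Q_m is a minimal primary decomposition in S⁻¹A and (S⁻¹I)^c = Q₁ ∩ … ∩ Q_m is a minimal primary decomposition in A. -/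
open scoped Classical

noncomputable section

/-- A semigroup order on monomials: a strict total order on exponent vectors (written
additively; the monomial `1` corresponds to `0`) compatible with multiplication. -/
def IsSemigroupOrder {σ : Type*} (lt : (σ →₀ ℕ) → (σ →₀ ℕ) → Prop) : Prop :=
  IsStrictTotalOrder (σ →₀ ℕ) lt ∧ ∀ a b c : σ →₀ ℕ, lt a b → lt (c + a) (c + b)

/-- The variable `i` is local for the order `lt`, i.e. `x_i < 1`. -/
def IsLocalVar {σ : Type*} (lt : (σ →₀ ℕ) → (σ →₀ ℕ) → Prop) (i : σ) : Prop :=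
  lt (Finsupp.single i 1) 0

/-- A control order: a semigroup order under which every monomial divisible by a local
variable is `< 1`. -/
def IsControlOrder {σ : Type*} (lt : (σ →₀ ℕ) → (σ →₀ ℕ) → Prop) : Prop :=
  IsSemigroupOrder lt ∧ ∀ m : σ →₀ ℕ, (∃ i, IsLocalVar lt i ∧ m i ≠ 0) → lt m 0

/-- `m` is the leading monomial of `g` w.r.t. `lt`. -/
def IsLeadingMonomial {K : Type*} [CommSemiring K] {σ : Type*}
    (lt : (σ →₀ ℕ) → (σ →₀ ℕ) → Prop) (g : MvPolynomial σ K) (m : σ →₀ ℕ) : Prop :=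
  m ∈ g.support ∧ ∀ m' ∈ g.support, m' ≠ m → lt m' m

/-- The multiplicative set `S = {1 + g : g = 0 or lt(g) < 1}`. -/
def SDen (K : Type*) [CommSemiring K] {σ : Type*}
    (lt : (σ →₀ ℕ) → (σ →₀ ℕ) → Prop) : Set (MvPolynomial σ K) :=
  {f | ∃ g : MvPolynomial σ K, f = 1 + g ∧
    (g = 0 ∨ ∃ m, IsLeadingMonomial lt g m ∧ lt m 0)}

/-- `I = ⋂ i ∈ s, Q i` is a minimal primary decomposition: every `Q i` is primary, the
radicals are pairwise distinct, and no component contains the intersection of the others. -/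
def MinPrimDecOn {R : Type*} [CommRing R] {ι : Type*} (I : Ideal R) (Q : ι → Ideal R)
    (s : Finset ι) : Prop :=
  I = ⨅ i ∈ s, Q i ∧ (∀ i ∈ s, (Q i).IsPrimary) ∧
    (∀ i ∈ s, ∀ j ∈ s, (Q i).radical = (Q j).radical → i = j) ∧
    ∀ i ∈ s, ¬ (⨅ j ∈ s.erase i, Q j) ≤ Q i

/-- The extraction determined by the decomposition `Q` (over `s`) and the ideal `J`:
the intersection of those components `Q i` with `Q i + J ≠ A` (which is `⊤` = the whole
ring when there are no such components). -/
def extractionFrom {R : Type*} [CommRing R] {ι : Type*} (J : Ideal R) (Q : ι → Ideal R)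
    (s : Finset ι) : Ideal R :=
  ⨅ i ∈ s.filter (fun i => Q i ⊔ J ≠ ⊤), Q i

/-- `B` is the extraction `β(I,J)` of `I` by `J`. -/
def IsExtraction {R : Type*} [CommRing R] (I J B : Ideal R) : Prop :=
  ∃ (k : ℕ) (Q : Fin k → Ideal R), MinPrimDecOn I Q Finset.univ ∧
    B = extractionFrom J Q Finset.univ

/-- `t ⊆ s` determines an isolated set of primes of the decomposition `Q` over `s`. -/
def IsIsolatedOn {R : Type*} [CommRing R] {ι : Type*} (Q : ι → Ideal R)
    (s t : Finset ι) : Prop :=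
  t ⊆ s ∧ ∀ j ∈ s, (∃ i ∈ t, (Q j).radical ≤ (Q i).radical) → j ∈ t

/-- The lifted ideal `W' = ⟨W, t₁ - g₁, …, t_s - g_s⟩ ⊆ A' = K[x₁,…,xₙ,t₁,…,t_s]`. -/
def liftIdeal {K : Type*} [CommRing K] {n s : ℕ} (g : Fin s → MvPolynomial (Fin n) K)
    (W : Ideal (MvPolynomial (Fin n) K)) : Ideal (MvPolynomial (Fin n ⊕ Fin s) K) :=
  W.map (MvPolynomial.rename (Sum.inl : Fin n → Fin n ⊕ Fin s)).toRingHom ⊔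
    Ideal.span (Set.range fun w : Fin s =>
      (MvPolynomial.X (Sum.inr w) : MvPolynomial (Fin n ⊕ Fin s) K) -
        MvPolynomial.rename (Sum.inl : Fin n → Fin n ⊕ Fin s) (g w))

/-- The substitution homomorphism `φ : A' → A`, fixing each `x_i` and sending `t_w ↦ g_w`. -/
def substHom {K : Type*} [CommRing K] {n s : ℕ} (g : Fin s → MvPolynomial (Fin n) K) :
    MvPolynomial (Fin n ⊕ Fin s) K →ₐ[K] MvPolynomial (Fin n) K :=
  MvPolynomial.aeval (Sum.elim MvPolynomial.X g)

/-!
If `>` is a control order, then `S = 1 + J` with `J` the ideal generated by the local variables.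
Hence an ideal `Q` misses `S` exactly when `Q + J ≠ A`, and the two decompositions are the usual
behaviour of primary decompositions under localization at `S`.

Otherwise some monomial `x ^ m > 1` is divisible by a local variable. Comparing leading monomials,
no multiple of `x ^ m - 1` lies in `S`, so some prime `P ∋ x ^ m - 1` misses `S`. Since `x ^ m ∈ J`,
we have `P + J = A`, although `S⁻¹P ≠ S⁻¹A`.
-/

section PrimaryDecomposition

variable {R ι : Type*} [CommRing R] {I J : Ideal R} {Q : ι → Ideal R} {s t : Finset ι}

theorem MinPrimDecOn.singleton {i : ι} (hQ : (Q i).IsPrimary) : MinPrimDecOn (Q i) Q {i} := by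
  refine ⟨by simp, by simpa using hQ, by simp, ?_⟩
  simpa using (Ideal.isPrimary_iff.1 hQ).1

theorem MinPrimDecOn.of_subset (h : MinPrimDecOn I Q s) (hts : t ⊆ s) :
    MinPrimDecOn (⨅ i ∈ t, Q i) Q t := by
  obtain ⟨-, hprimary, hradical, hirredundant⟩ := h
  refine ⟨rfl, fun i hi => hprimary i (hts hi),
    fun i hi j hj => hradical i (hts hi) j (hts hj), fun i hi hle => ?_⟩
  exact hirredundant i (hts hi)
    ((biInf_mono fun _ hj => Finset.erase_subset_erase i hts hj).trans hle)

theorem MinPrimDecOn.of_comap {B : Type*} [CommRing B] {φ : R →+* B} {Q' : ι → Ideal B}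
    (h : MinPrimDecOn I Q t) (hQ' : ∀ i ∈ t, (Q' i).IsPrimary)
    (hcomap : ∀ i ∈ t, (Q' i).comap φ = Q i) : MinPrimDecOn (⨅ i ∈ t, Q' i) Q' t := by
  obtain ⟨-, -, hradical, hirredundant⟩ := h
  refine ⟨rfl, hQ', fun i hi j hj hij => ?_, fun i hi hle => ?_⟩
  · apply hradical i hi j hj
    rw [← hcomap i hi, ← hcomap j hj, ← Ideal.comap_radical, hij, Ideal.comap_radical]
  · apply hirredundant i hi
    calc ⨅ j ∈ t.erase i, Q j = (⨅ j ∈ t.erase i, Q' j).comap φ := by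
          simp only [Ideal.comap_iInf]
          exact biInf_congr fun j hj => (hcomap j (Finset.mem_of_mem_erase hj)).symm
      _ ≤ (Q' i).comap φ := Ideal.comap_mono hle
      _ = Q i := hcomap i hi

theorem disjoint_iff_sup_ne_top {S : Set R} (hS : ∀ f, f ∈ S ↔ f - 1 ∈ J) :
    Disjoint S (I : Set R) ↔ I ⊔ J ≠ ⊤ := by
  rw [← not_iff_not, not_not, Set.not_disjoint_iff, Ideal.eq_top_iff_one, Submodule.mem_sup]
  constructor
  · rintro ⟨f, hfS, hfI⟩
    exact ⟨f, hfI, -(f - 1), neg_mem ((hS f).1 hfS), by ring⟩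
  · rintro ⟨f, hfI, j, hj, hsum⟩
    refine ⟨f, (hS f).2 ?_, hfI⟩
    rw [← hsum, sub_add_cancel_left]
    exact neg_mem hj

section Localization

variable (S : Submonoid R) (B : Type*) [CommRing B] [Algebra R B] [IsLocalization S B]

theorem isPrimary_map_of_isPrimary_disjoint (hI : I.IsPrimary)
    (hdisj : Disjoint (S : Set R) (I : Set R)) : (I.map (algebraMap R B)).IsPrimary := by
  have hcomap : (I.map (algebraMap R B)).comap (algebraMap R B) = I :=
    IsLocalization.under_map_of_isPrimary_disjoint S B hI hdisj
  refine Ideal.isPrimary_iff.2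
    ⟨(IsLocalization.map_algebraMap_ne_top_iff_disjoint S B I).2 hdisj, fun {x y} hxy => ?_⟩
  obtain ⟨a, u, rfl⟩ := IsLocalization.exists_mk'_eq S x
  obtain ⟨b, v, rfl⟩ := IsLocalization.exists_mk'_eq S y
  rw [← IsLocalization.mk'_mul, IsLocalization.mk'_mem_iff, ← Ideal.mem_comap, hcomap] at hxy
  simp only [IsLocalization.mk'_mem_iff, ← Ideal.mem_comap, Ideal.comap_radical, hcomap]
  exact (Ideal.isPrimary_iff.1 hI).2 hxy

theorem map_iInf_eq_iInf_filter_disjoint (Q : ι → Ideal R) (s : Finset ι) :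
    (⨅ i ∈ s, Q i).map (algebraMap R B) =
      ⨅ i ∈ s.filter fun i => Disjoint (S : Set R) (Q i : Set R), (Q i).map (algebraMap R B) := by
  have map_iInf : (⨅ i ∈ s, Q i).map (algebraMap R B) = ⨅ i ∈ s, (Q i).map (algebraMap R B) := by
    simpa only [Finset.inf_eq_iInf, Function.comp_apply, IsLocalization.mapFrameHom_apply] using
      map_finset_inf (IsLocalization.mapFrameHom S B) s Q
  rw [map_iInf]
  refine le_antisymm (biInf_mono fun _ hi => (Finset.mem_filter.1 hi).1)
    (le_iInf₂ fun i hi => ?_)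
  by_cases hdisj : Disjoint (S : Set R) (Q i : Set R)
  · exact iInf₂_le i (Finset.mem_filter.2 ⟨hi, hdisj⟩)
  · rw [← IsLocalization.map_algebraMap_ne_top_iff_disjoint S B, not_not] at hdisj
    exact hdisj ▸ le_top

theorem MinPrimDecOn.map_and_comap_map (h : MinPrimDecOn I Q s) :
    MinPrimDecOn (I.map (algebraMap R B)) (fun i => (Q i).map (algebraMap R B))
        (s.filter fun i => Disjoint (S : Set R) (Q i : Set R)) ∧
      MinPrimDecOn ((I.map (algebraMap R B)).comap (algebraMap R B)) Q
        (s.filter fun i => Disjoint (S : Set R) (Q i : Set R)) := by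
  set t := s.filter fun i => Disjoint (S : Set R) (Q i : Set R)
  have hcomap : ∀ i ∈ t, ((Q i).map (algebraMap R B)).comap (algebraMap R B) = Q i := fun i hi =>
    IsLocalization.under_map_of_isPrimary_disjoint S B (h.2.1 i (Finset.mem_filter.1 hi).1)
      (Finset.mem_filter.1 hi).2
  have hprimary : ∀ i ∈ t, ((Q i).map (algebraMap R B)).IsPrimary := fun i hi =>
    isPrimary_map_of_isPrimary_disjoint S B (h.2.1 i (Finset.mem_filter.1 hi).1)
      (Finset.mem_filter.1 hi).2
  have hmap : I.map (algebraMap R B) = ⨅ i ∈ t, (Q i).map (algebraMap R B) :=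
    h.1 ▸ map_iInf_eq_iInf_filter_disjoint S B Q s
  have hcontraction : (I.map (algebraMap R B)).comap (algebraMap R B) = ⨅ i ∈ t, Q i := by
    simp only [hmap, Ideal.comap_iInf]
    exact biInf_congr hcomap
  have ht : MinPrimDecOn (⨅ i ∈ t, Q i) Q t := h.of_subset (Finset.filter_subset _ s)
  exact ⟨hmap ▸ ht.of_comap hprimary hcomap, hcontraction ▸ ht⟩

end Localization

end PrimaryDecomposition

theorem exists_forall_ne_rel_of_isStrictTotalOrder {α : Type*} (r : α → α → Prop)
    [IsStrictTotalOrder α r] {s : Finset α} (hs : s.Nonempty) :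
    ∃ m ∈ s, ∀ a ∈ s, a ≠ m → r a m := by
  let := linearOrderOfSTO r
  obtain ⟨m, hm, hmax⟩ := s.exists_max_image id hs
  exact ⟨m, hm, fun a ha hne => lt_of_le_of_ne (hmax a ha) hne⟩

section MonomialOrder

open MvPolynomial

variable {σ : Type*} {lt : (σ →₀ ℕ) → (σ →₀ ℕ) → Prop}

namespace IsSemigroupOrder

theorem lt_add_of_zero_lt (hsem : IsSemigroupOrder lt) {a : σ →₀ ℕ} (ha : lt 0 a)
    (b : σ →₀ ℕ) : lt b (a + b) := by
  simpa only [add_comm a, add_zero b] using hsem.2 0 a b ha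

theorem lt_zero_or_lt_zero_of_add_lt_zero (hsem : IsSemigroupOrder lt) {a b : σ →₀ ℕ}
    (hab : lt (a + b) 0) : lt a 0 ∨ lt b 0 := by
  have := hsem.1
  rcases trichotomous_of lt a 0 with ha | rfl | ha
  · exact Or.inl ha
  · exact Or.inr (by rwa [zero_add] at hab)
  · exact Or.inr (_root_.trans (hsem.lt_add_of_zero_lt ha b) hab)

theorem exists_isLocalVar_of_lt_zero (hsem : IsSemigroupOrder lt) {m : σ →₀ ℕ}
    (hm : lt m 0) : ∃ i, IsLocalVar lt i ∧ m i ≠ 0 := by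
  have := hsem.1
  induction m using Finsupp.induction_linear with
  | zero => exact absurd hm (irrefl_of lt 0)
  | add a b iha ihb =>
    rcases hsem.lt_zero_or_lt_zero_of_add_lt_zero hm with ha | hb
    · obtain ⟨i, hi, hai⟩ := iha ha
      exact ⟨i, hi, by simp [hai]⟩
    · obtain ⟨i, hi, hbi⟩ := ihb hb
      exact ⟨i, hi, by simp [hbi]⟩
  | single i k =>
    induction k with
    | zero => exact absurd (by simpa using hm) (irrefl_of lt 0)
    | succ k ih =>
      rw [Finsupp.single_add] at hm
      rcases hsem.lt_zero_or_lt_zero_of_add_lt_zero hm with hk | hi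
      · obtain ⟨j, hj, hkj⟩ := ih hk
        exact ⟨j, hj, by simp [Finsupp.single_add, hkj]⟩
      · exact ⟨i, hi, by simp⟩

theorem exists_zero_lt_of_not_isControlOrder (hsem : IsSemigroupOrder lt)
    (hcontrol : ¬ IsControlOrder lt) : ∃ m, lt 0 m ∧ ∃ i, IsLocalVar lt i ∧ m i ≠ 0 := by
  have := hsem.1
  simp only [IsControlOrder, hsem, true_and, not_forall] at hcontrol
  obtain ⟨m, ⟨i, hi, hmi⟩, hm⟩ := hcontrol
  have hm0 : m ≠ 0 := by
    rintro rfl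
    exact hmi rfl
  exact ⟨m, ((trichotomous_of lt m 0).resolve_left hm).resolve_left hm0, i, hi, hmi⟩

theorem exists_isLeadingMonomial {K : Type*} [CommSemiring K] (hsem : IsSemigroupOrder lt)
    {g : MvPolynomial σ K} (hg : g ≠ 0) : ∃ m, IsLeadingMonomial lt g m := by
  have := hsem.1
  exact exists_forall_ne_rel_of_isStrictTotalOrder lt (support_nonempty.2 hg)

end IsSemigroupOrder

variable {K : Type*} [CommRing K]

theorem mem_SDen_iff (hsem : IsSemigroupOrder lt) {f : MvPolynomial σ K} :
    f ∈ SDen K lt ↔ ∀ m ∈ (f - 1).support, lt m 0 := by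
  have := hsem.1
  constructor
  · rintro ⟨g, rfl, hg⟩ m hm
    rw [add_sub_cancel_left] at hm
    rcases hg with rfl | ⟨a, ⟨-, hmax⟩, ha⟩
    · simp at hm
    · rcases eq_or_ne m a with rfl | hne
      · exact ha
      · exact _root_.trans (hmax m hm hne) ha
  · intro hf
    refine ⟨f - 1, by ring, or_iff_not_imp_left.2 fun hne => ?_⟩
    obtain ⟨m, hm⟩ := hsem.exists_isLeadingMonomial hne
    exact ⟨m, hm, hf m hm.1⟩

theorem coeff_eq_coeff_one_of_mem_SDen (hsem : IsSemigroupOrder lt) {f : MvPolynomial σ K}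
    (hf : f ∈ SDen K lt) {m : σ →₀ ℕ} (hm : ¬ lt m 0) :
    f.coeff m = (1 : MvPolynomial σ K).coeff m :=
  sub_eq_zero.1 <| by
    simpa only [mem_support_iff, coeff_sub, not_not] using mt ((mem_SDen_iff hsem).1 hf m) hm

/-- The ideal of `K[x]` generated by the local variables of the order `lt`. -/
def localVarIdeal (K : Type*) [CommSemiring K] (lt : (σ →₀ ℕ) → (σ →₀ ℕ) → Prop) :
    Ideal (MvPolynomial σ K) :=
  Ideal.span (X '' {i | IsLocalVar lt i})

theorem IsControlOrder.mem_SDen_iff_sub_one_mem (hlt : IsControlOrder lt)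
    {f : MvPolynomial σ K} : f ∈ SDen K lt ↔ f - 1 ∈ localVarIdeal K lt := by
  rw [mem_SDen_iff hlt.1, localVarIdeal, mem_ideal_span_X_image]
  exact forall₂_congr fun m _ => ⟨hlt.1.exists_isLocalVar_of_lt_zero, hlt.2 m⟩

theorem monomial_one_mem_localVarIdeal {m : σ →₀ ℕ} (hm : ∃ i, IsLocalVar lt i ∧ m i ≠ 0) :
    monomial m 1 ∈ localVarIdeal K lt := by
  rw [localVarIdeal, mem_ideal_span_X_image]
  intro m' hm'
  rwa [Finset.mem_singleton.1 (support_monomial_subset hm')]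

variable [Nontrivial K]

theorem monomial_sub_one_mul_notMem_SDen (hsem : IsSemigroupOrder lt) {m : σ →₀ ℕ} (hm : lt 0 m)
    (h : MvPolynomial σ K) : (monomial m 1 - 1) * h ∉ SDen K lt := by
  have := hsem.1
  intro hS
  have hm0 : m ≠ 0 := by
    rintro rfl
    exact irrefl_of lt 0 hm
  have hcoeff_zero : h.coeff 0 = -1 := by
    have := coeff_eq_coeff_one_of_mem_SDen hsem hS (irrefl_of lt 0)
    rw [sub_mul, coeff_sub, coeff_monomial_mul'] at this
    simpa [hm0, neg_eq_iff_eq_neg] using this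
  have zero_mem : 0 ∈ h.support := by simp [hcoeff_zero]
  obtain ⟨a, ha, hmax⟩ := hsem.exists_isLeadingMonomial (support_nonempty.1 ⟨0, zero_mem⟩)
  have a_lt : lt a (m + a) := hsem.lt_add_of_zero_lt hm a
  have zero_lt : lt 0 (m + a) := by
    rcases eq_or_ne 0 a with rfl | hne
    · exact a_lt
    · exact _root_.trans (hmax 0 zero_mem hne) a_lt
  have hcoeff : h.coeff a - h.coeff (m + a) = 0 := by
    have := coeff_eq_coeff_one_of_mem_SDen hsem hS (asymm_of lt zero_lt)
    have hne : 0 ≠ m + a := fun h0 => irrefl_of lt 0 (by rwa [← h0] at zero_lt)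
    simpa [sub_mul, coeff_monomial_mul, coeff_one, hne] using this
  have mem_support : m + a ∈ h.support := by
    rw [mem_support_iff, ← sub_eq_zero.1 hcoeff]
    exact mem_support_iff.1 ha
  exact asymm_of lt a_lt (hmax (m + a) mem_support (by simpa using hm0))

theorem exists_isPrime_disjoint_sup_localVarIdeal_eq_top (hsem : IsSemigroupOrder lt)
    (hcontrol : ¬ IsControlOrder lt) (S : Submonoid (MvPolynomial σ K))
    (hS : (S : Set (MvPolynomial σ K)) = SDen K lt) :
    ∃ P : Ideal (MvPolynomial σ K), P.IsPrime ∧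
      Disjoint (S : Set (MvPolynomial σ K)) (P : Set (MvPolynomial σ K)) ∧
      P ⊔ localVarIdeal K lt = ⊤ := by
  obtain ⟨m, hm, hlocal⟩ := hsem.exists_zero_lt_of_not_isControlOrder hcontrol
  let I : Ideal (MvPolynomial σ K) := Ideal.span {monomial m 1 - 1}
  have hdisj : Disjoint (I : Set (MvPolynomial σ K)) S := by
    refine Set.disjoint_left.2 fun f hfI hfS => ?_
    obtain ⟨h, rfl⟩ := Ideal.mem_span_singleton.1 hfI
    exact monomial_sub_one_mul_notMem_SDen hsem hm h (hS ▸ hfS)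
  obtain ⟨P, hP, hIP, hPS⟩ := Ideal.exists_le_prime_disjoint I S hdisj
  refine ⟨P, hP, hPS.symm, (Ideal.eq_top_iff_one _).2 (Submodule.mem_sup.2 ?_)⟩
  exact ⟨_, neg_mem (hIP (Ideal.mem_span_singleton_self _)), _,
    monomial_one_mem_localVarIdeal hlocal, by ring⟩

theorem stmt_1_general (hsem : IsSemigroupOrder lt) (S : Submonoid (MvPolynomial σ K))
    (hS : (S : Set (MvPolynomial σ K)) = SDen K lt)
    (B : Type*) [CommRing B] [Algebra (MvPolynomial σ K) B] [IsLocalization S B] :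
    IsControlOrder lt ↔
      ∀ I : Ideal (MvPolynomial σ K), I ≠ ⊤ →
        ∀ (k : ℕ) (Q : Fin k → Ideal (MvPolynomial σ K)), MinPrimDecOn I Q Finset.univ →
          MinPrimDecOn (I.map (algebraMap (MvPolynomial σ K) B))
              (fun i => (Q i).map (algebraMap (MvPolynomial σ K) B))
              (Finset.univ.filter fun i => Q i ⊔ localVarIdeal K lt ≠ ⊤) ∧
            MinPrimDecOn
              ((I.map (algebraMap (MvPolynomial σ K) B)).comap (algebraMap (MvPolynomial σ K) B))
              Q (Finset.univ.filter fun i => Q i ⊔ localVarIdeal K lt ≠ ⊤) := by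
  constructor
  · intro hcontrol I _ k Q hQ
    have hSJ (f) : f ∈ (S : Set (MvPolynomial σ K)) ↔ f - 1 ∈ localVarIdeal K lt :=
      hS ▸ hcontrol.mem_SDen_iff_sub_one_mem
    simpa only [disjoint_iff_sup_ne_top hSJ] using hQ.map_and_comap_map S B
  · intro hdec
    by_contra hcontrol
    obtain ⟨P, hP, hdisj, htop⟩ :=
      exists_isPrime_disjoint_sup_localVarIdeal_eq_top hsem hcontrol S hS
    have hmap := (hdec P hP.ne_top 1 (fun _ => P) 
      (MinPrimDecOn.singleton (Q := fun _ => P) hP.isPrimary)).1.1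
    refine (IsLocalization.map_algebraMap_ne_top_iff_disjoint S B P).2 hdisj ?_
    simpa [htop] using hmap

end MonomialOrder

/-- `lt` is a control order iff for every proper ideal `I` and every minimal
primary decomposition of `I`, localizing at `S` keeps exactly the components `Q i` with
`Q i + ⟨local variables⟩ ≠ A`, both in `S⁻¹A` and after contraction in `A`, and these are
minimal primary decompositions. -/
theorem stmt_1 {K : Type*} [Field K] {n : ℕ}
    (lt : (Fin n →₀ ℕ) → (Fin n →₀ ℕ) → Prop) (hsem : IsSemigroupOrder lt)
    (loc : Finset (Fin n)) (hloc : ∀ i, i ∈ loc ↔ IsLocalVar lt i)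
    (S : Submonoid (MvPolynomial (Fin n) K)) (hS : (S : Set (MvPolynomial (Fin n) K)) = SDen K lt) :
    IsControlOrder lt ↔
      ∀ (I : Ideal (MvPolynomial (Fin n) K)), I ≠ ⊤ →
        ∀ (k : ℕ) (Q : Fin k → Ideal (MvPolynomial (Fin n) K)),
          MinPrimDecOn I Q Finset.univ →
            (MinPrimDecOn (I.map (algebraMap (MvPolynomial (Fin n) K) (Localization S)))
                (fun i => (Q i).map (algebraMap (MvPolynomial (Fin n) K) (Localization S)))
                (Finset.univ.filter fun i =>
                  Q i ⊔ Ideal.span ((fun j => (MvPolynomial.X j : MvPolynomial (Fin n) K)) ''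
                    (loc : Set (Fin n))) ≠ ⊤) ∧
              MinPrimDecOn
                ((I.map (algebraMap (MvPolynomial (Fin n) K) (Localization S))).comap
                  (algebraMap (MvPolynomial (Fin n) K) (Localization S)))
                Q
                (Finset.univ.filter fun i =>
                  Q i ⊔ Ideal.span ((fun j => (MvPolynomial.X j : MvPolynomial (Fin n) K)) ''
                    (loc : Set (Fin n))) ≠ ⊤)) := by
  have hloc_eq : (loc : Set (Fin n)) = {i | IsLocalVar lt i} := Set.ext hloc
  simpa only [localVarIdeal, ← hloc_eq] using stmt_1_general hsem S hS (Localization S)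
end
end

section
/- Let > be a control order on the monomials of A' = K[x₁,…,xₙ,t₁,…,t_s] whose local variables are exactly t₁,…,t_s, with multiplicative set S' := {1+g : g = 0 or lt(g) < 1} ⊆ A'. Then β(I,J) equals the preimage of S'⁻¹I' under the composite map A ↪ A' → S'⁻¹A', and √β(I,J) equals the preimage of √(S'⁻¹I') under the same composite map. -/
open scoped Classical

noncomputable section

/-!
Under a control order a monomial is `< 1` exactly when a local variable divides it, so
`S' = 1 + ⟨t₁, …, t_s⟩`. The substitution `t_w ↦ g_w` is a retraction `A' → A` under which `I'` is
the preimage of `I` and `S'` maps onto `1 + J`; hence the preimage of `S'⁻¹I'` in `A` consists of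
the `f` with `u f ∈ I` for some `u ∈ 1 + J`. By primariness, `u f ∈ Q` forces `f ∈ Q` unless `1 + J`
meets `Q`, that is, unless `Q + J = A`; conversely, the intersection of the components comaximal
with `J` is itself comaximal with `J`, so one `u ∈ 1 + J` lies in all of them.
-/

section MonomialOrders

variable {σ K : Type*} {lt : (σ →₀ ℕ) → (σ →₀ ℕ) → Prop}

/-- The monomials that are at least `1` in a semigroup order, as a submonoid of the additive monoid
of exponent vectors; `1 ≤ m` is written `¬ lt m 0`. -/
def IsSemigroupOrder.geOne (h : IsSemigroupOrder lt) : AddSubmonoid (σ →₀ ℕ) where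
  carrier := {m | ¬ lt m 0}
  zero_mem' := h.1.irrefl 0
  add_mem' {a b} ha hb hab := by
    have := h.1
    rcases trichotomous_of lt b 0 with hb_lt | rfl | hb_gt
    · exact hb hb_lt
    · exact ha (by rwa [add_zero] at hab)
    · have a_lt_add : lt (a + 0) (a + b) := h.2 0 b a hb_gt
      rw [add_zero] at a_lt_add
      exact ha (_root_.trans a_lt_add hab)

theorem IsSemigroupOrder.mem_geOne (h : IsSemigroupOrder lt) {m : σ →₀ ℕ} :
    m ∈ h.geOne ↔ ¬ lt m 0 :=
  Iff.rfl

theorem IsSemigroupOrder.exists_isLocalVar_of_lt_zero_s8 (h : IsSemigroupOrder lt) {m : σ →₀ ℕ}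
    (hm : lt m 0) : ∃ i, IsLocalVar lt i ∧ m i ≠ 0 := by
  by_contra! no_local
  suffices hmem : m ∈ h.geOne from h.mem_geOne.1 hmem hm
  rw [← Finsupp.sum_single m]
  refine sum_mem fun i hi => ?_
  have single_mem : Finsupp.single i 1 ∈ h.geOne := fun hi_local =>
    Finsupp.mem_support_iff.1 hi (no_local i hi_local)
  simpa only [Finsupp.smul_single_one] using nsmul_mem single_mem (m i)

theorem IsControlOrder.lt_zero_iff (h : IsControlOrder lt) {m : σ →₀ ℕ} :
    lt m 0 ↔ ∃ i, IsLocalVar lt i ∧ m i ≠ 0 :=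
  ⟨h.1.exists_isLocalVar_of_lt_zero_s8, h.2 m⟩

theorem exists_isLeadingMonomial [CommSemiring K] [IsStrictTotalOrder (σ →₀ ℕ) lt]
    {g : MvPolynomial σ K} (hg : g ≠ 0) : ∃ m, IsLeadingMonomial lt g m := by
  obtain ⟨m, hm, hmax⟩ := @Finset.exists_max_image _ _ (linearOrderOfSTO lt) g.support id
    (MvPolynomial.support_nonempty.2 hg)
  exact ⟨m, hm, fun m' hm' hne => (hmax m' hm').resolve_left hne⟩

theorem one_add_mem_SDen_iff [CommRing K] [IsStrictTotalOrder (σ →₀ ℕ) lt]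
    {g : MvPolynomial σ K} : 1 + g ∈ SDen K lt ↔ ∀ m ∈ g.support, lt m 0 := by
  constructor
  · rintro ⟨g', hg', hlead⟩ m hm
    obtain rfl : g = g' := add_left_cancel hg'
    rcases hlead with rfl | ⟨m₀, ⟨-, hmax⟩, hm₀⟩
    · simp at hm
    · rcases eq_or_ne m m₀ with rfl | hne
      · exact hm₀
      · exact _root_.trans (hmax m hm hne) hm₀
  · refine fun hg => ⟨g, rfl, or_iff_not_imp_left.2 fun hne => ?_⟩
    obtain ⟨m, hm⟩ := exists_isLeadingMonomial (lt := lt) hne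
    exact ⟨m, hm, hg m hm.1⟩

theorem IsControlOrder.one_add_mem_SDen_iff_mem_span [CommRing K] (h : IsControlOrder lt)
    {g : MvPolynomial σ K} :
    1 + g ∈ SDen K lt ↔ g ∈ Ideal.span (MvPolynomial.X '' {i | IsLocalVar lt i}) := by
  have := h.1.1
  rw [one_add_mem_SDen_iff, MvPolynomial.mem_ideal_span_X_image]
  exact forall₂_congr fun _ _ => h.lt_zero_iff

end MonomialOrders

section OneAddIdeal

variable {R R' : Type*} [CommRing R] [CommRing R']

/-- The multiplicative set `1 + J` of an ideal `J`, encoded as the preimage of `{1}` under the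
projection `R → R ⧸ J`. -/
def oneAddSubmonoid (J : Ideal R) : Submonoid R :=
  (⊥ : Submonoid (R ⧸ J)).comap (Ideal.Quotient.mk J)

theorem mem_oneAddSubmonoid {J : Ideal R} {u : R} : u ∈ oneAddSubmonoid J ↔ u - 1 ∈ J := by
  rw [oneAddSubmonoid, Submonoid.mem_comap, Submonoid.mem_bot, ← map_one (Ideal.Quotient.mk J),
    Ideal.Quotient.mk_eq_mk_iff_sub_mem]

theorem map_oneAddSubmonoid {φ : R →+* R'} (hφ : Function.Surjective φ) (J : Ideal R) :
    (oneAddSubmonoid J).map φ = oneAddSubmonoid (J.map φ) := by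
  ext v
  simp only [Submonoid.mem_map, mem_oneAddSubmonoid]
  constructor
  · rintro ⟨u, hu, rfl⟩
    simpa only [map_sub, map_one] using Ideal.mem_map_of_mem φ hu
  · intro hv
    obtain ⟨j, hj, hjv⟩ := (Ideal.mem_map_iff_of_surjective φ hφ).1 hv
    exact ⟨1 + j, by rwa [add_sub_cancel_left], by rw [map_add, map_one, hjv, add_sub_cancel]⟩

theorem sup_eq_top_iff_exists_mem_oneAddSubmonoid {Q J : Ideal R} :
    Q ⊔ J = ⊤ ↔ ∃ u ∈ oneAddSubmonoid J, u ∈ Q := by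
  rw [Ideal.eq_top_iff_one, Submodule.mem_sup]
  constructor
  · rintro ⟨u, hu, j, hj, huj⟩
    refine ⟨u, mem_oneAddSubmonoid.2 ?_, hu⟩
    rwa [← huj, sub_add_cancel_left, neg_mem_iff]
  · rintro ⟨u, hu, huQ⟩
    exact ⟨u, huQ, 1 - u, by rwa [← neg_mem_iff, neg_sub, ← mem_oneAddSubmonoid],
      add_sub_cancel u 1⟩

theorem mem_of_mul_mem_of_mem_oneAddSubmonoid {Q J : Ideal R} (hQ : Q.IsPrimary)
    (hQJ : Q ⊔ J ≠ ⊤) {u f : R} (hu : u ∈ oneAddSubmonoid J) (huf : u * f ∈ Q) : f ∈ Q := by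
  rw [mul_comm] at huf
  refine ((Ideal.isPrimary_iff.1 hQ).2 huf).resolve_right ?_
  rintro ⟨N, huN⟩
  exact hQJ (sup_eq_top_iff_exists_mem_oneAddSubmonoid.2 ⟨u ^ N, pow_mem hu N, huN⟩)

theorem mem_extractionFrom_iff {ι : Type*} {J : Ideal R} {Q : ι → Ideal R} {t : Finset ι}
    (hQ : ∀ i ∈ t, (Q i).IsPrimary) {f : R} :
    f ∈ extractionFrom J Q t ↔ ∃ u ∈ oneAddSubmonoid J, u * f ∈ ⨅ i ∈ t, Q i := by
  simp only [extractionFrom, Submodule.mem_iInf, Finset.mem_filter, and_imp]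
  constructor
  · intro hf
    have comaximal : (⨅ i ∈ t.filter (fun i => Q i ⊔ J = ⊤), Q i) ⊔ J = ⊤ :=
      sup_comm J _ ▸ Ideal.sup_iInf_eq_top fun i hi => sup_comm (Q i) J ▸ (Finset.mem_filter.1 hi).2
    obtain ⟨u, hu, huQ⟩ := sup_eq_top_iff_exists_mem_oneAddSubmonoid.1 comaximal
    simp only [Submodule.mem_iInf, Finset.mem_filter, and_imp] at huQ
    refine ⟨u, hu, fun i hi => ?_⟩
    by_cases hQJ : Q i ⊔ J = ⊤
    · exact Ideal.mul_mem_right _ _ (huQ i hi hQJ)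
    · exact Ideal.mul_mem_left _ _ (hf i hi hQJ)
  · rintro ⟨u, hu, huf⟩ i hi hQJ
    exact mem_of_mul_mem_of_mem_oneAddSubmonoid (hQ i hi) hQJ hu (huf i hi)

theorem mem_comap_map_comap_iff_of_leftInverse {φ : R' →+* R} {ψ : R →+* R'}
    (hφψ : Function.LeftInverse φ ψ) (S : Submonoid R') (L : Type*) [CommRing L] [Algebra R' L]
    [IsLocalization S L] {I : Ideal R} {f : R} :
    f ∈ ((I.comap φ).map (algebraMap R' L)).comap ((algebraMap R' L).comp ψ) ↔
      ∃ u ∈ S.map φ, u * f ∈ I := by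
  rw [Ideal.mem_comap, RingHom.comp_apply, IsLocalization.algebraMap_mem_map_algebraMap_iff S]
  simp only [Ideal.mem_comap, map_mul, hφψ f, Submonoid.mem_map, exists_exists_and_eq_and]

end OneAddIdeal

section Substitution

variable {K : Type*} [CommRing K] {n s : ℕ} (g : Fin s → MvPolynomial (Fin n) K)

theorem substHom_X_inr (w : Fin s) : substHom g (MvPolynomial.X (Sum.inr w)) = g w := by
  rw [substHom, MvPolynomial.aeval_X, Sum.elim_inr]

theorem leftInverse_substHom_rename_inl :
    Function.LeftInverse (substHom g) (MvPolynomial.rename Sum.inl) := by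
  intro p
  rw [substHom, MvPolynomial.aeval_rename, Sum.elim_comp_inl, MvPolynomial.aeval_X_left_apply]

theorem map_substHom_span_X_inr :
    (Ideal.span (MvPolynomial.X '' Set.range Sum.inr)).map (substHom g) =
      Ideal.span (Set.range g) := by
  rw [Ideal.map_span, ← Set.range_comp, ← Set.range_comp]
  congr 2
  exact funext (substHom_X_inr g)

theorem sub_rename_substHom_mem_liftIdeal (I : Ideal (MvPolynomial (Fin n) K))
    (p : MvPolynomial (Fin n ⊕ Fin s) K) :
    p - MvPolynomial.rename Sum.inl (substHom g p) ∈ liftIdeal g I := by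
  suffices hom_eq : Ideal.Quotient.mkₐ K (liftIdeal g I) =
      (Ideal.Quotient.mkₐ K (liftIdeal g I)).comp
        ((MvPolynomial.rename Sum.inl).comp (substHom g)) from
    (Ideal.Quotient.mk_eq_mk_iff_sub_mem _ _).1 (DFunLike.congr_fun hom_eq p)
  ext v
  rcases v with i | w
  · simp [substHom]
  · refine (Ideal.Quotient.mk_eq_mk_iff_sub_mem _ _).2
      (Ideal.mem_sup_right (Ideal.subset_span ⟨w, ?_⟩))
    simp only [RingHom.coe_coe, AlgHom.comp_apply, substHom_X_inr]

theorem liftIdeal_eq_comap_substHom (I : Ideal (MvPolynomial (Fin n) K)) :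
    liftIdeal g I = I.comap (substHom g) := by
  apply le_antisymm
  · refine sup_le (Ideal.map_le_iff_le_comap.2 fun p hp => ?_) (Ideal.span_le.2 ?_)
    · simpa [leftInverse_substHom_rename_inl g p] using hp
    · rintro _ ⟨w, rfl⟩
      rw [SetLike.mem_coe, Ideal.mem_comap, map_sub, substHom_X_inr,
        leftInverse_substHom_rename_inl g (g w), sub_self]
      exact I.zero_mem
  · intro p hp
    have rename_mem : MvPolynomial.rename Sum.inl (substHom g p) ∈ liftIdeal g I :=
      Ideal.mem_sup_left (Ideal.mem_map_of_mem (MvPolynomial.rename Sum.inl).toRingHom hp)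
    exact (Submodule.sub_mem_iff_left _ rename_mem).1 (sub_rename_substHom_mem_liftIdeal g I p)

theorem map_substHom_eq_oneAddSubmonoid
    {lt : ((Fin n ⊕ Fin s) →₀ ℕ) → ((Fin n ⊕ Fin s) →₀ ℕ) → Prop} (hctrl : IsControlOrder lt)
    (hloc : ∀ v, IsLocalVar lt v ↔ ∃ w, v = Sum.inr w)
    {S' : Submonoid (MvPolynomial (Fin n ⊕ Fin s) K)} (hS' : (S' : Set _) = SDen K lt) :
    S'.map (substHom g) = oneAddSubmonoid (Ideal.span (Set.range g)) := by
  have localVars_eq : {v | IsLocalVar lt v} = Set.range Sum.inr := by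
    ext v
    simp only [Set.mem_ofPred_eq, hloc, Set.mem_range, eq_comm]
  have S'_eq : S' = oneAddSubmonoid (Ideal.span (MvPolynomial.X '' Set.range Sum.inr)) := by
    ext u
    rw [mem_oneAddSubmonoid, ← localVars_eq, ← hctrl.one_add_mem_SDen_iff_mem_span,
      add_sub_cancel, ← hS', SetLike.mem_coe]
  rw [S'_eq, ← map_substHom_span_X_inr]
  exact map_oneAddSubmonoid (leftInverse_substHom_rename_inl g).surjective _

end Substitution

theorem stmt_8_general {K : Type*} [CommRing K] {n s : ℕ}
    {lt : ((Fin n ⊕ Fin s) →₀ ℕ) → ((Fin n ⊕ Fin s) →₀ ℕ) → Prop} (hctrl : IsControlOrder lt)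
    (hloc : ∀ v, IsLocalVar lt v ↔ ∃ w, v = Sum.inr w)
    {S' : Submonoid (MvPolynomial (Fin n ⊕ Fin s) K)} (hS' : (S' : Set _) = SDen K lt)
    (L : Type*) [CommRing L] [Algebra (MvPolynomial (Fin n ⊕ Fin s) K) L] [IsLocalization S' L]
    {I J : Ideal (MvPolynomial (Fin n) K)}
    {g : Fin s → MvPolynomial (Fin n) K} (hJg : J = Ideal.span (Set.range g))
    {ι : Type*} {Q : ι → Ideal (MvPolynomial (Fin n) K)} {t : Finset ι}
    (hIQ : I = ⨅ i ∈ t, Q i) (hQ : ∀ i ∈ t, (Q i).IsPrimary)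
    {ρ : MvPolynomial (Fin n) K →+* L}
    (hρ : ρ = (algebraMap (MvPolynomial (Fin n ⊕ Fin s) K) L).comp
      (MvPolynomial.rename Sum.inl).toRingHom) :
    extractionFrom J Q t = ((liftIdeal g I).map (algebraMap _ L)).comap ρ ∧
      (extractionFrom J Q t).radical = ((liftIdeal g I).map (algebraMap _ L)).radical.comap ρ := by
  have extraction_eq : extractionFrom J Q t = ((liftIdeal g I).map (algebraMap _ L)).comap ρ := by
    ext f
    rw [mem_extractionFrom_iff hQ, ← hIQ, hJg, ← map_substHom_eq_oneAddSubmonoid g hctrl hloc hS',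
      liftIdeal_eq_comap_substHom, hρ]
    exact (mem_comap_map_comap_iff_of_leftInverse (leftInverse_substHom_rename_inl g) S' L).symm
  exact ⟨extraction_eq, by rw [Ideal.comap_radical, extraction_eq]⟩

/-- for a control order on `A' = K[x,t]` with local variables exactly the
`t`'s, `β(I,J)` is the preimage of `S'⁻¹I'` under `A ↪ A' → S'⁻¹A'`, and `√β(I,J)` is the
preimage of `√(S'⁻¹I')` under the same map. -/
theorem stmt_8 {K : Type*} [Field K] {n s : ℕ}
    (lt : ((Fin n ⊕ Fin s) →₀ ℕ) → ((Fin n ⊕ Fin s) →₀ ℕ) → Prop)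
    (hctrl : IsControlOrder lt)
    (hloc : ∀ v : Fin n ⊕ Fin s, IsLocalVar lt v ↔ ∃ w : Fin s, v = Sum.inr w)
    (S' : Submonoid (MvPolynomial (Fin n ⊕ Fin s) K))
    (hS' : (S' : Set (MvPolynomial (Fin n ⊕ Fin s) K)) = SDen K lt)
    (I J : Ideal (MvPolynomial (Fin n) K)) (hI : I ≠ ⊤) (hJ : J ≠ ⊤)
    (g : Fin s → MvPolynomial (Fin n) K) (hJg : J = Ideal.span (Set.range g))
    (k : ℕ) (Qd : Fin k → Ideal (MvPolynomial (Fin n) K))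
    (hQd : MinPrimDecOn I Qd Finset.univ)
    (ρ : MvPolynomial (Fin n) K →+* Localization S')
    (hρ : ρ = (algebraMap (MvPolynomial (Fin n ⊕ Fin s) K) (Localization S')).comp
      (MvPolynomial.rename (Sum.inl : Fin n → Fin n ⊕ Fin s)).toRingHom) :
    extractionFrom J Qd Finset.univ =
        Ideal.comap ρ ((liftIdeal g I).map
          (algebraMap (MvPolynomial (Fin n ⊕ Fin s) K) (Localization S'))) ∧
      (extractionFrom J Qd Finset.univ).radical =
        Ideal.comap ρ (((liftIdeal g I).map
          (algebraMap (MvPolynomial (Fin n ⊕ Fin s) K) (Localization S'))).radical) :=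
  stmt_8_general hctrl hloc hS' (Localization S') hJg hQd.1 hQd.2.1 hρ
end
end
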